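/- Let χ : [0,∞) → [0,1] be a smooth function with χ ≡ 1 on [0,1] and χ ≡ 0 on [2,∞). Let φ : (0,1] → ℝ be continuous and differentiable on (0,1), with lim_{r→0⁺} φ(r) = 0 and ∫₀¹ ( φ'(r)² + φ(r)²/r² ) r dr < ∞. For ε ∈ (0,1/2) define φ_ε(r) := χ(r/ε) φ(r). Then ∫₀¹ ( φ_ε'(r)² + φ_ε(r)²/r² ) r dr → 0 as ε → 0⁺. (Consequently (1 − χ(·/ε))φ → φ in the weighted space H with norm ‖φ‖²_H = ∫₀¹ (φ'² + φ²/r²) r dr, so functions vanishing near 0 are dense in H.) -/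

import Mathlib

open Set Real Filter MeasureTheory

/-- Cutting off near the origin with `χ(·/ε)` produces functions whose
weighted `H`-norm tends to `0` as `ε → 0⁺`; hence functions vanishing near `0` are
dense in the weighted space `H`. -/
theorem cutoff_tendsto_zero_in_H
    (χ : ℝ → ℝ) (hχ : ContDiff ℝ (⊤ : ℕ∞) χ)
    (hχ01 : ∀ x : ℝ, 0 ≤ x → χ x ∈ Set.Icc (0:ℝ) 1)
    (hχ1 : ∀ x ∈ Set.Icc (0:ℝ) 1, χ x = 1)
    (hχ0 : ∀ x : ℝ, 2 ≤ x → χ x = 0)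
    (φ : ℝ → ℝ)
    (hφc : ContinuousOn φ (Set.Ioc 0 1))
    (hφd : DifferentiableOn ℝ φ (Set.Ioo 0 1))
    (hφ0 : Tendsto φ (nhdsWithin 0 (Set.Ioi 0)) (nhds 0))
    (hφint : IntegrableOn (fun r => (deriv φ r^2 + φ r^2 / r^2) * r) (Set.Ioo 0 1)) :
    Tendsto (fun ε : ℝ => ∫ r in Set.Ioo (0:ℝ) 1,
        (deriv (fun s => χ (s/ε) * φ s) r^2 + (χ (r/ε) * φ r)^2 / r^2) * r)
      (nhdsWithin 0 (Set.Ioi 0)) (nhds 0) := by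
  have hdχ : Differentiable ℝ χ := hχ.differentiable (by simp)
  have hcd : Continuous (deriv χ) := hχ.continuous_deriv (by simp)
  obtain ⟨M, hM⟩ := (isCompact_Icc (a := (0:ℝ)) (b := 2)).exists_bound_of_continuousOn
    hcd.continuousOn
  have hM0 : 0 ≤ M := (norm_nonneg _).trans (hM 0 (by simp))
  -- the cut-off function vanishes near points with r > 2 ε
  have hzero : ∀ ε : ℝ, 0 < ε → ∀ r : ℝ, 2 * ε < r →
      deriv (fun s => χ (s/ε) * φ s) r = 0 ∧ χ (r/ε) = 0 := by
    intro ε hε r hr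
    have hv : ∀ s : ℝ, 2 * ε < s → χ (s/ε) = 0 := fun s hs =>
      hχ0 _ (by rw [le_div_iff₀ hε]; exact hs.le)
    refine ⟨?_, hv r hr⟩
    have : (fun s => χ (s/ε) * φ s) =ᶠ[nhds r] fun _ => (0:ℝ) := by
      filter_upwards [lt_mem_nhds hr] with s hs
      simp [hv s hs]
    rw [this.deriv_eq]
    simp
  have hlim : (0:ℝ) = ∫ r in Set.Ioo (0:ℝ) 1, (0:ℝ) := by simp
  suffices hs : Tendsto (fun ε : ℝ => ∫ r in Set.Ioo (0:ℝ) 1,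
        (deriv (fun s => χ (s/ε) * φ s) r^2 + (χ (r/ε) * φ r)^2 / r^2) * r)
      (nhdsWithin 0 (Set.Ioi 0)) (nhds (∫ r in Set.Ioo (0:ℝ) 1, (0:ℝ))) by
    rwa [← hlim] at hs
  refine tendsto_integral_filter_of_dominated_convergence
    (fun r => (8 * M^2 + 3) * ((deriv φ r^2 + φ r^2 / r^2) * r)) ?_ ?_
    (hφint.const_mul _) ?_
  · filter_upwards with ε
    have h1 : Measurable (deriv (fun s => χ (s/ε) * φ s)) := measurable_deriv _
    have h2 : AEStronglyMeasurable φ (volume.restrict (Set.Ioo (0:ℝ) 1)) :=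
      (hφc.mono Ioo_subset_Ioc_self).aestronglyMeasurable measurableSet_Ioo
    have h3 : Measurable (fun r : ℝ => χ (r/ε)) := by
      have := hχ.continuous.measurable
      fun_prop
    have h4 := h2.aemeasurable
    have h5 := h3.aemeasurable (μ := volume.restrict (Set.Ioo (0:ℝ) 1))
    have h6 := h1.aemeasurable (μ := volume.restrict (Set.Ioo (0:ℝ) 1))
    exact (((h6.pow_const 2).add (((h5.mul h4).pow_const 2).div
      (aemeasurable_id.pow_const 2))).mul aemeasurable_id).aestronglyMeasurable
  · filter_upwards [self_mem_nhdsWithin] with ε hε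
    have hε : 0 < ε := hε
    refine (ae_restrict_iff' measurableSet_Ioo).2 (Eventually.of_forall fun r hr => ?_)
    have hr0 : 0 < r := hr.1
    rw [Real.norm_of_nonneg (by positivity), ← mul_assoc]
    refine mul_le_mul_of_nonneg_right ?_ hr0.le
    rcases lt_or_ge (2 * ε) r with h | h
    · obtain ⟨ha, hb⟩ := hzero ε hε r h
      rw [ha, hb]
      have : 0 ≤ (8 * M^2 + 3) * (deriv φ r^2 + φ r^2 / r^2) := by positivity
      simpa using this
    · have hφr : HasDerivAt φ (deriv φ r) r :=
        (hφd.differentiableAt (Ioo_mem_nhds hr.1 hr.2)).hasDerivAt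
      have hc : HasDerivAt (fun s => χ (s/ε)) (deriv χ (r/ε) * (1/ε)) r :=
        HasDerivAt.comp r (hdχ (r/ε)).hasDerivAt ((hasDerivAt_id r).div_const ε)
      have hprod : deriv (fun s => χ (s/ε) * φ s) r =
          deriv χ (r/ε) * (1/ε) * φ r + χ (r/ε) * deriv φ r := (hc.mul hφr).deriv
      rw [hprod]
      clear hprod
      have hA : |deriv χ (r/ε)| ≤ M :=
        hM _ ⟨by positivity, by rw [div_le_iff₀ hε]; exact h⟩
      have hB := hχ01 (r/ε) (by positivity)
      have hinv : 1/ε ≤ 2/r := by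
        rw [div_le_div_iff₀ hε hr0]; linarith
      have hK : |deriv χ (r/ε) * (1/ε)| ≤ M * (2/r) := by
        rw [abs_mul, abs_of_pos (by positivity : 0 < 1/ε)]
        gcongr
      generalize deriv χ (r/ε) * (1/ε) = K at hK
      obtain ⟨hB0, hB1⟩ := hB
      generalize χ (r/ε) = c at hB0 hB1
      have hK2 : K^2 ≤ (M * (2/r))^2 := sq_le_sq' (abs_le.1 hK).1 (abs_le.1 hK).2
      have hc2 : c^2 ≤ 1 := by nlinarith
      have e1 : (K * φ r)^2 ≤ 4 * M^2 * (φ r^2 / r^2) := by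
        calc (K * φ r)^2 = K^2 * φ r^2 := by ring
          _ ≤ (M * (2/r))^2 * φ r^2 := by gcongr
          _ = _ := by field_simp; ring
      have e2 : (c * deriv φ r)^2 ≤ deriv φ r^2 := by
        rw [mul_pow]; exact mul_le_of_le_one_left (sq_nonneg _) hc2
      have e3 : (c * φ r)^2 / r^2 ≤ φ r^2 / r^2 := by
        refine div_le_div_of_nonneg_right ?_ (sq_nonneg r)
        rw [mul_pow]; exact mul_le_of_le_one_left (sq_nonneg _) hc2
      have e4 : 0 ≤ φ r^2 / r^2 := by positivity
      have e5 : 0 ≤ M^2 * deriv φ r^2 := by positivity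
      nlinarith [sq_nonneg (K * φ r - c * deriv φ r), sq_nonneg (deriv φ r)]
  · refine (ae_restrict_iff' measurableSet_Ioo).2 (Eventually.of_forall fun r hr => ?_)
    have hr0 : 0 < r := hr.1
    refine tendsto_const_nhds.congr' ?_
    filter_upwards [self_mem_nhdsWithin,
      nhdsWithin_le_nhds (gt_mem_nhds (half_pos hr0))] with ε hε hεr
    obtain ⟨ha, hb⟩ := hzero ε hε r (by linarith)
    rw [ha, hb]
    simp
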